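/- Let (R,m,k) be a one-dimensional Noetherian reduced local ring with finitely generated integral closure S and uncountable residue field k, and let x be a minimal reduction of m. Then λ_R(̄(m²)/xm) = dim_k((R+mS)/(R+m²S)). -/

import Mathlib

open IsLocalRing

/-- The length of a module, expressed as the Krull dimension of its lattice of submodules. -/
noncomputable def moduleLength (R M : Type*) [Ring R] [AddCommGroup M] [Module R M] :
    WithBot ℕ∞ :=
  Order.krullDim (Submodule R M)

/-- The set of elements of `R` integral over the ideal `I`. -/
def idealIntCl {R : Type*} [CommRing R] (I : Ideal R) : Set R :=
  {y | ∃ n : ℕ, 0 < n ∧ ∃ a : ℕ → R, (∀ i, 1 ≤ i → i ≤ n → a i ∈ I ^ i) ∧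
    y ^ n + ∑ i ∈ Finset.Icc 1 n, a i * y ^ (n - i) = 0}

/-- The integral closure of an ideal `I`, as an ideal (the set `idealIntCl I` is an ideal, so
the ideal it generates coincides with it). -/
def idealIntClI {R : Type*} [CommRing R] (I : Ideal R) : Ideal R :=
  Ideal.span (idealIntCl I)

section RelativeLength

variable {R M M' : Type*} [Ring R] [AddCommGroup M] [Module R M] [AddCommGroup M'] [Module R M']

/-- The length of `N / (N ⊓ P)` for submodules `N`, `P` of a module. -/
noncomputable def relLength (N P : Submodule R M) : ℕ∞ :=
  Module.length R (N ⧸ Submodule.comap N.subtype P)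

lemma relLength_add {P N L : Submodule R M} (hPN : P ≤ N) (hNL : N ≤ L) :
    relLength L P = relLength N P + relLength L N := by
  have h1 : Submodule.comap N.subtype P ≤
      (Submodule.comap L.subtype P).comap (Submodule.inclusion hNL) := fun _ h ↦ h
  have h2 : Submodule.comap L.subtype P ≤ (Submodule.comap L.subtype N).comap LinearMap.id :=
    fun _ h ↦ hPN h
  refine Module.length_eq_add_of_exact (Submodule.mapQ _ _ _ h1) (Submodule.mapQ _ _ _ h2) ?_ ?_ ?_
  · rw [injective_iff_map_eq_zero]
    intro y hy
    obtain ⟨y, rfl⟩ := Submodule.Quotient.mk_surjective _ y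
    rw [Submodule.mapQ_apply, Submodule.Quotient.mk_eq_zero] at hy
    exact (Submodule.Quotient.mk_eq_zero _).2 hy
  · intro y
    obtain ⟨y, rfl⟩ := Submodule.Quotient.mk_surjective _ y
    exact ⟨Submodule.Quotient.mk y, rfl⟩
  · intro y
    obtain ⟨y, rfl⟩ := Submodule.Quotient.mk_surjective _ y
    rw [Submodule.mapQ_apply, Submodule.Quotient.mk_eq_zero]
    constructor
    · intro h
      exact ⟨Submodule.Quotient.mk ⟨y, h⟩, rfl⟩
    · rintro ⟨z, hz⟩
      obtain ⟨z, rfl⟩ := Submodule.Quotient.mk_surjective _ z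
      rw [Submodule.mapQ_apply, Submodule.Quotient.eq] at hz
      have hz : (z : M) - y ∈ P := hz
      simpa using N.sub_mem z.2 (hPN hz)

lemma relLength_inf (N P : Submodule R M) : relLength N (N ⊓ P) = relLength N P := by
  rw [relLength, relLength, Submodule.comap_inf, Submodule.comap_subtype_self, top_inf_eq]

lemma relLength_sup (N P : Submodule R M) : relLength (N ⊔ P) P = relLength N P := by
  rw [← relLength_inf N P, relLength, relLength, Submodule.comap_inf]
  exact (LinearMap.quotientInfEquivSupQuotient N P).symm.length_eq

lemma relLength_map {f : M →ₗ[R] M'} (hf : Function.Injective f) (N P : Submodule R M) :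
    relLength (N.map f) (P.map f) = relLength N P := by
  refine (Submodule.Quotient.equiv _ _ (Submodule.equivMapOfInjective f hf N) ?_).symm.length_eq
  ext ⟨_, y, hy, rfl⟩
  simp only [Submodule.mem_map, Submodule.mem_comap, Submodule.subtype_apply]
  constructor
  · rintro ⟨z, hz, h⟩
    exact ⟨z, hz, congrArg Subtype.val h⟩
  · rintro ⟨z, hz, h⟩
    obtain rfl := hf h
    exact ⟨⟨z, hy⟩, hz, rfl⟩

end RelativeLength

/-- An injective endomorphism `f` of `M` changes the colength of a finite colength submodule `P`
with `f P ≤ P` as it changes that of `M` itself. -/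
lemma relLength_map_self {R M : Type*} [Ring R] [AddCommGroup M] [Module R M] {f : M →ₗ[R] M}
    (hf : Function.Injective f) {P : Submodule R M} (hP : P.map f ≤ P)
    (hfin : relLength ⊤ P ≠ ⊤) :
    relLength P (P.map f) = relLength ⊤ (Submodule.map f ⊤) := by
  have h1 := relLength_add hP le_top
  have h2 := relLength_add (Submodule.map_mono (f := f) (le_top : P ≤ ⊤)) le_top
  rw [relLength_map hf] at h2
  rw [h1, add_comm] at h2
  exact (WithTop.add_left_inj hfin).1 h2

lemma isIntegral_of_smul_mem_of_fg {R A : Type*} [CommRing R] [CommRing A] [Algebra R A]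
    {N : Submodule R A} (hN : N.FG) {a : A} (ha : a ∈ N) (ha' : a ∈ nonZeroDivisors A) {q : A}
    (hq : ∀ n ∈ N, q * n ∈ N) : IsIntegral R q := by
  let A' : Subalgebra R A :=
    { carrier := { x | ∀ n ∈ N, x * n ∈ N }
      mul_mem' := fun {a b} ha hb n hn => mul_assoc a b n ▸ ha _ (hb _ hn)
      one_mem' := fun n hn => (one_mul n).symm ▸ hn
      add_mem' := fun {a b} ha hb n hn => (add_mul a b n).symm ▸ N.add_mem (ha _ hn) (hb _ hn)
      zero_mem' := fun n _ => (zero_mul n).symm ▸ N.zero_mem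
      algebraMap_mem' := fun r n hn => (Algebra.smul_def r n) ▸ N.smul_mem r hn }
  let f : A' →ₐ[R] Module.End R N :=
    AlgHom.ofLinearMap
      { toFun := fun x => (LinearMap.mulLeft R (x : A)).restrict x.prop
        map_add' := by intro x y; ext; exact add_mul _ _ _
        map_smul' := by intro r s; ext; exact smul_mul_assoc _ _ _ }
      (by ext; exact one_mul _)
      (by intro x y; ext; exact mul_assoc _ _ _)
  have hf : Function.Injective f := by
    rw [injective_iff_map_eq_zero]
    intro s hs
    have : s.1 * a = 0 := congr_arg Subtype.val (LinearMap.congr_fun hs ⟨a, ha⟩)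
    exact Subtype.ext ((mul_right_mem_nonZeroDivisors_eq_zero_iff ha').1 this)
  change IsIntegral R (A'.val ⟨q, hq⟩)
  rw [isIntegral_algHom_iff A'.val Subtype.val_injective,
    ← isIntegral_algHom_iff (R := R) (A := A') (B := Module.End R N) f hf]
  have : Module.Finite R N := by rwa [Module.Finite.iff_fg]
  exact Algebra.IsIntegral.isIntegral _

lemma mem_nonZeroDivisors_of_reduction {R : Type*} [CommRing R] [IsLocalRing R] [IsReduced R]
    (hR : ¬ IsField R) {x : R} {n : ℕ}
    (h : maximalIdeal R ^ (n + 1) = Ideal.span {x} * maximalIdeal R ^ n) :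
    x ∈ nonZeroDivisors R := by
  rw [mem_nonZeroDivisors_iff_right]
  intro y hy
  have key : ∀ a ∈ maximalIdeal R, a * y = 0 := by
    intro a ha
    have h1 := Ideal.pow_mem_pow ha (n + 1)
    rw [h, Ideal.mem_span_singleton_mul] at h1
    obtain ⟨z, -, hz⟩ := h1
    refine eq_zero_of_pow_eq_zero (n := n + 1) ?_
    rw [mul_pow, ← hz, pow_succ y]
    linear_combination z * y ^ n * hy
  by_cases hu : IsUnit y
  · refine absurd (isField_iff_maximalIdeal_eq.2 ?_) hR
    rw [eq_bot_iff]
    intro a ha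
    exact (hu.mul_left_eq_zero).1 (key a ha)
  · exact eq_zero_of_pow_eq_zero (n := 2) (by rw [pow_two, key y hu])

lemma relLength_top_map_lsmul_ne_top {R S : Type*} [CommRing R] [AddCommGroup S] [Module R S]
    [IsNoetherianRing R] [Ring.KrullDimLE 1 R] [Module.Finite R S] {d : R}
    (hd : d ∈ nonZeroDivisors R) :
    relLength ⊤ (Submodule.map (LinearMap.lsmul R S d) ⊤) ≠ ⊤ := by
  have hfin := isFiniteLength_quotient_span_singleton R hd
  rw [isFiniteLength_iff_isNoetherian_isArtinian] at hfin
  obtain ⟨-, hart⟩ := hfin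
  obtain ⟨n, f, hf⟩ := Module.Finite.exists_fin' R S
  let N : Submodule R S := Submodule.map (LinearMap.lsmul R S d) ⊤
  let I : Submodule R (Fin n → R) := Submodule.pi Set.univ fun _ ↦ Ideal.span {d}
  have hI : I ≤ N.comap f := by
    intro v hv
    choose w hw using fun i ↦ Ideal.mem_span_singleton'.1 (hv i trivial)
    refine ⟨f w, trivial, ?_⟩
    rw [LinearMap.lsmul_apply, ← map_smul]
    congr 1
    ext i
    simp [← hw i, mul_comm]
  have : IsArtinian R ((Fin n → R) ⧸ I) :=
    isArtinian_of_linearEquiv (Submodule.quotientPi fun _ : Fin n ↦ Ideal.span {d}).symm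
  have : IsArtinian R (S ⧸ N) := by
    refine isArtinian_of_surjective _ (I.mapQ N f hI) fun y ↦ ?_
    obtain ⟨y, rfl⟩ := Submodule.Quotient.mk_surjective _ y
    obtain ⟨v, rfl⟩ := hf y
    exact ⟨Submodule.Quotient.mk v, rfl⟩
  have e : ((⊤ : Submodule R S) ⧸ N.comap (⊤ : Submodule R S).subtype) ≃ₗ[R] S ⧸ N :=
    Submodule.Quotient.equiv _ _ Submodule.topEquiv (by ext y; simp)
  rw [relLength, e.length_eq]
  exact Module.length_ne_top

lemma algebraMap_injective_of_fractionRing (R S : Type*) [CommRing R] [CommRing S]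
    [Algebra R S] [Algebra S (FractionRing R)] [IsScalarTower R S (FractionRing R)] :
    Function.Injective (algebraMap R S) := by
  have h := IsFractionRing.injective R (FractionRing R)
  rw [IsScalarTower.algebraMap_eq R S (FractionRing R)] at h
  exact Function.Injective.of_comp (f := algebraMap S (FractionRing R)) h

section OneDimensional

variable {R S : Type*} [CommRing R] [CommRing S] [Algebra R S] [Algebra S (FractionRing R)]
  [IsScalarTower R S (FractionRing R)] [IsIntegralClosure S R (FractionRing R)]

lemma lsmul_injective_of_mem_nonZeroDivisors {x : R} (hx : x ∈ nonZeroDivisors R) :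
    Function.Injective (LinearMap.lsmul R S x) := by
  intro s t h
  apply IsIntegralClosure.algebraMap_injective S R (FractionRing R)
  refine ((IsLocalization.map_units (FractionRing R) ⟨x, hx⟩).mul_right_inj).1 ?_
  have := congrArg (algebraMap S (FractionRing R)) h
  simpa [Algebra.smul_def, ← IsScalarTower.algebraMap_apply] using this

lemma exists_smul_mem_one [Module.Finite R S] :
    ∃ c ∈ nonZeroDivisors R, ∀ s : S, c • s ∈ (1 : Submodule R S) := by
  classical
  obtain ⟨t, ht⟩ := Module.Finite.fg_top (R := R) (M := S)
  obtain ⟨c, hc⟩ := IsLocalization.exist_integer_multiples_of_finset (nonZeroDivisors R)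
    (t.image (algebraMap S (FractionRing R)))
  refine ⟨c, c.2, fun s ↦ ?_⟩
  suffices (⊤ : Submodule R S) ≤ (1 : Submodule R S).comap (LinearMap.lsmul R S (c : R)) from
    this trivial
  rw [← ht, Submodule.span_le]
  intro a ha
  obtain ⟨r, hr⟩ := hc _ (Finset.mem_image_of_mem _ ha)
  refine Submodule.mem_one.2 ⟨r, ?_⟩
  apply IsIntegralClosure.algebraMap_injective S R (FractionRing R)
  rw [← IsScalarTower.algebraMap_apply, hr]
  simp [Algebra.smul_def, ← IsScalarTower.algebraMap_apply]

/-- If `m ^ (n + 1) = x m ^ n` with `x ∈ m` regular, then `m S = x S`. -/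
lemma exists_algebraMap_eq_smul_of_reduction [IsNoetherianRing R] {m : Ideal R} {x : R}
    (hxm : x ∈ m) (hx : x ∈ nonZeroDivisors R) {n : ℕ}
    (h : m ^ (n + 1) = Ideal.span {x} * m ^ n) {y : R} (hy : y ∈ m) :
    ∃ s : S, algebraMap R S y = x • s := by
  let Q := FractionRing R
  let q : Q := IsLocalization.mk' Q y ⟨x, hx⟩
  have hq : algebraMap R Q x * q = algebraMap R Q y := IsLocalization.mk'_spec' Q y ⟨x, hx⟩
  have hq_int : IsIntegral R q := by
    refine isIntegral_of_smul_mem_of_fg (N := Submodule.map (Algebra.linearMap R Q) (m ^ n))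
      (Submodule.FG.map _ (IsNoetherian.noetherian _))
      (Submodule.mem_map_of_mem (Ideal.pow_mem_pow hxm n)) ?_ ?_
    · rw [Algebra.linearMap_apply, map_pow]
      exact pow_mem (IsLocalization.map_units Q ⟨x, hx⟩).mem_nonZeroDivisors n
    · rintro _ ⟨z, hz, rfl⟩
      have hyz : y * z ∈ m ^ (n + 1) := by
        rw [pow_succ']
        exact Ideal.mul_mem_mul hy hz
      rw [h, Ideal.mem_span_singleton_mul] at hyz
      obtain ⟨w, hw, hwz⟩ := hyz
      refine ⟨w, hw, ?_⟩
      refine ((IsLocalization.map_units Q ⟨x, hx⟩).mul_right_inj).1 ?_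
      simp only [Algebra.linearMap_apply]
      rw [← mul_assoc, hq, ← map_mul, ← map_mul, hwz]
  refine ⟨IsIntegralClosure.mk' S q hq_int, ?_⟩
  apply IsIntegralClosure.algebraMap_injective S R Q
  rw [Algebra.smul_def, map_mul, IsIntegralClosure.algebraMap_mk',
    ← IsScalarTower.algebraMap_apply, ← IsScalarTower.algebraMap_apply, hq]

/-- If `I S = d S` with `d ∈ I` regular, then the integral closure of `I` is `d S ∩ R`. -/
lemma mem_idealIntCl_iff [Nontrivial R] {I : Ideal R} {d : R} (hdI : d ∈ I)
    (hd : d ∈ nonZeroDivisors R)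
    (hI : ∀ y ∈ I, ∃ s : S, algebraMap R S y = d • s) (y : R) :
    y ∈ idealIntCl I ↔ ∃ s : S, algebraMap R S y = d • s := by
  constructor
  · rintro ⟨n, -, a, ha, hy⟩
    have hIle : I.map (algebraMap R S) ≤ Ideal.span {algebraMap R S d} := by
      rw [Ideal.map_le_iff_le_comap]
      intro z hz
      obtain ⟨s, hs⟩ := hI z hz
      rw [Ideal.mem_comap, Ideal.mem_span_singleton, hs, Algebra.smul_def]
      exact dvd_mul_right _ _
    have hpow (i : ℕ) (h1 : 1 ≤ i) (h2 : i ≤ n) :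
        ∃ s : S, algebraMap R S (a i) = algebraMap R S d ^ i * s := by
      have h3 := Ideal.pow_right_mono hIle i
        (Ideal.map_pow (algebraMap R S) I i ▸ Ideal.mem_map_of_mem (algebraMap R S) (ha i h1 h2))
      rwa [Ideal.span_singleton_pow, Ideal.mem_span_singleton] at h3
    choose! s hs using hpow
    let Q := FractionRing R
    let q : Q := IsLocalization.mk' Q y ⟨d, hd⟩
    have hq : algebraMap R Q d * q = algebraMap R Q y := IsLocalization.mk'_spec' Q y ⟨d, hd⟩
    have hq_int : IsIntegral S q := by
      refine ⟨Polynomial.X ^ n + ∑ i ∈ Finset.Icc 1 n, Polynomial.C (s i) * Polynomial.X ^ (n - i),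
        Polynomial.monic_X_pow_add ?_, ?_⟩
      · refine lt_of_le_of_lt (Polynomial.degree_sum_le _ _) ?_
        refine (Finset.sup_lt_iff (WithBot.bot_lt_coe n)).2 fun i hi ↦ ?_
        refine lt_of_le_of_lt (Polynomial.degree_C_mul_X_pow_le _ _) ?_
        rw [Finset.mem_Icc] at hi
        exact (Nat.cast_lt (α := WithBot ℕ)).2 (by omega)
      · refine (((IsLocalization.map_units Q ⟨d, hd⟩).pow n).mul_right_eq_zero).1 ?_
        have h0 := congrArg (algebraMap R Q) hy
        simp only [map_add, map_sum, map_mul, map_pow, map_zero] at h0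
        rw [← h0, ← hq]
        simp only [Polynomial.eval₂_add, Polynomial.eval₂_finsetSum, Polynomial.eval₂_mul,
          Polynomial.eval₂_pow, Polynomial.eval₂_X, Polynomial.eval₂_C]
        rw [mul_add, mul_pow, Finset.mul_sum]
        congr 1
        refine Finset.sum_congr rfl fun i hi ↦ ?_
        rw [Finset.mem_Icc] at hi
        rw [IsScalarTower.algebraMap_apply R S Q (a i), hs i hi.1 hi.2, map_mul, map_pow,
          ← IsScalarTower.algebraMap_apply, mul_pow]
        rw [← pow_mul_pow_sub (algebraMap R Q d) hi.2]
        ring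
    have : Algebra.IsIntegral R S := IsIntegralClosure.isIntegral_algebra R Q
    have hq_int_R : IsIntegral R q := isIntegral_trans q hq_int
    refine ⟨IsIntegralClosure.mk' S q hq_int_R, ?_⟩
    apply IsIntegralClosure.algebraMap_injective S R Q
    rw [Algebra.smul_def, map_mul, IsIntegralClosure.algebraMap_mk',
      ← IsScalarTower.algebraMap_apply, ← IsScalarTower.algebraMap_apply, hq]
  · rintro ⟨s, hs⟩
    obtain ⟨p, hp, hps⟩ := IsIntegralClosure.isIntegral R (FractionRing R) s
    obtain ⟨p, hp, hps, hpos⟩ : ∃ p : Polynomial R, p.Monic ∧ Polynomial.aeval s p = 0 ∧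
        0 < p.natDegree := by
      refine ⟨Polynomial.X * p, Polynomial.monic_X.mul hp, ?_, ?_⟩
      · rw [map_mul, Polynomial.aeval_def _ p, hps, mul_zero]
      · rw [Polynomial.monic_X.natDegree_mul hp, Polynomial.natDegree_X]
        omega
    refine ⟨p.natDegree, hpos, fun i ↦ d ^ i * p.coeff (p.natDegree - i),
      fun i _ _ ↦ Ideal.mul_mem_right _ _ (Ideal.pow_mem_pow hdI i), ?_⟩
    apply algebraMap_injective_of_fractionRing R S
    have h0 : ∑ i ∈ Finset.range (p.natDegree + 1),
        algebraMap R S (p.coeff (p.natDegree - i)) * s ^ (p.natDegree - i) = 0 := by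
      rw [← hps, Polynomial.aeval_eq_sum_range, ← Finset.sum_range_reflect _ (p.natDegree + 1)]
      refine Finset.sum_congr rfl fun i hi ↦ ?_
      rw [Algebra.smul_def, Nat.add_sub_cancel,
        Nat.sub_sub_self (Nat.lt_succ_iff.1 (Finset.mem_range.1 hi))]
    have h1 : Finset.range (p.natDegree + 1) = insert 0 (Finset.Icc 1 p.natDegree) := by
      ext i
      simp only [Finset.mem_range, Finset.mem_insert, Finset.mem_Icc]
      omega
    rw [h1, Finset.sum_insert (by simp), Nat.sub_zero, hp.coeff_natDegree, map_one, one_mul] at h0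
    simp only [map_add, map_sum, map_mul, map_pow, map_zero, hs, Algebra.smul_def]
    rw [← mul_zero (algebraMap R S d ^ p.natDegree), ← h0, mul_add, mul_pow, Finset.mul_sum]
    congr 1
    refine Finset.sum_congr rfl fun i hi ↦ ?_
    rw [Finset.mem_Icc] at hi
    rw [← pow_mul_pow_sub (algebraMap R S d) hi.2]
    ring

end OneDimensional

/-- The numerical core of the comparison: `m` and `J` are submodules of `S`, `μ` is
multiplication by the reduction element, and `U` is the base ring inside `S`. -/
lemma relLength_eq_relLength_sup {R S : Type*} [Ring R] [AddCommGroup S] [Module R S]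
    {μ : S →ₗ[R] S} (hμ : Function.Injective μ) {U m J X Y : Submodule R S}
    (hX : X = Submodule.map μ ⊤) (hY : Y = X.map μ) (hJ : J = m ⊓ Y) (hm : m = U ⊓ X)
    (hmJ : m.map μ ≤ J) (hfin : relLength ⊤ m ≠ ⊤) (hfinX : relLength ⊤ X ≠ ⊤) :
    relLength J (m.map μ) = relLength (U ⊔ X) (U ⊔ Y) := by
  have hJm : J ≤ m := hJ ▸ inf_le_left
  have hmX : m ≤ X := hm ▸ inf_le_right
  have hYX : Y ≤ X := by
    rw [hY]
    exact (Submodule.map_mono le_top).trans hX.ge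
  have h1 : relLength m (m.map μ) = relLength ⊤ X := by
    rw [hX]
    exact relLength_map_self hμ (hmJ.trans hJm) hfin
  have h2 : relLength m (m.map μ) = relLength J (m.map μ) + relLength m J := relLength_add hmJ hJm
  have h3 : relLength X Y = relLength ⊤ X := by
    rw [hY, hX, relLength_map hμ]
  have h4 : relLength X Y = relLength (m ⊔ Y) Y + relLength X (m ⊔ Y) :=
    relLength_add le_sup_right (sup_le hmX hYX)
  have h5 : relLength (m ⊔ Y) Y = relLength m J := by
    rw [relLength_sup, hJ, relLength_inf]
  have h6 : relLength (U ⊔ X) (U ⊔ Y) = relLength X (m ⊔ Y) := by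
    have e1 : U ⊔ X = X ⊔ (U ⊔ Y) := by
      rw [sup_comm U Y, ← sup_assoc, sup_eq_left.2 hYX, sup_comm]
    have e2 : X ⊓ (U ⊔ Y) = m ⊔ Y := by
      rw [hm, inf_comm, sup_comm, sup_comm (U ⊓ X), sup_inf_assoc_of_le U hYX]
    rw [e1, relLength_sup, ← relLength_inf, e2]
  have hne : relLength m J ≠ ⊤ := by
    intro h
    rw [h, add_top, h1] at h2
    exact hfinX h2
  rw [h3, ← h1, h2, h5, add_comm] at h4
  rw [h6]
  exact (WithTop.add_left_inj hne).1 h4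

/-- Let `(R, m, k)` be a one-dimensional Noetherian reduced local ring with
finitely generated integral closure `S` (in the total ring of fractions), uncountable residue
field `k`, and `x` a minimal reduction of `m`.  Then
`λ_R( ̄(m²) / xm ) = dim_k( (R + mS) / (R + m²S) )` (both sides computed as `R`-module
lengths; the right-hand module is a `k`-vector space so its length is its `k`-dimension). -/
theorem stmt7 (R S : Type*) [CommRing R] [IsLocalRing R] [IsNoetherianRing R] [IsReduced R]
    (hdim : ringKrullDim R = 1)
    (hk : ¬ (Set.univ : Set (R ⧸ maximalIdeal R)).Countable)
    [CommRing S] [Algebra R S] [Algebra S (FractionRing R)]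
    [IsScalarTower R S (FractionRing R)]
    [IsIntegralClosure S R (FractionRing R)]
    [Module.Finite R S]
    (x : R) (hx : x ∈ maximalIdeal R)
    (hred : ∃ n : ℕ, maximalIdeal R ^ (n + 1) = Ideal.span {x} * maximalIdeal R ^ n)
    (A B : Submodule R S)
    (hA : A = (1 : Submodule R S) ⊔ (maximalIdeal R • ⊤))
    (hB : B = (1 : Submodule R S) ⊔ ((maximalIdeal R ^ 2) • ⊤)) :
    moduleLength R
      ((idealIntClI (maximalIdeal R ^ 2)) ⧸
        (Submodule.comap (idealIntClI (maximalIdeal R ^ 2)).subtype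
          ((Ideal.span {x} * maximalIdeal R : Ideal R) : Submodule R R)))
    = moduleLength R (A ⧸ (Submodule.comap A.subtype B)) := by
  have hfield : ¬ IsField R := fun h ↦ by
    rw [ringKrullDim_eq_zero_of_isField h] at hdim
    exact zero_ne_one hdim
  have : Ring.KrullDimLE 1 R := Ring.krullDimLE_iff.2 hdim.le
  obtain ⟨n, hn⟩ := hred
  have hxr := mem_nonZeroDivisors_of_reduction hfield hn
  set m := maximalIdeal R
  let μ : S →ₗ[R] S := LinearMap.lsmul R S x
  have hμ : Function.Injective μ := lsmul_injective_of_mem_nonZeroDivisors hxr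
  let ι : R →ₗ[R] S := Algebra.linearMap R S
  have hι : Function.Injective ι := algebraMap_injective_of_fractionRing R S
  have hmx (y : R) (hy : y ∈ m) : ∃ s : S, algebraMap R S y = x • s :=
    exists_algebraMap_eq_smul_of_reduction hx hxr hn hy
  have hX : m • (⊤ : Submodule R S) = Submodule.map μ ⊤ := by
    apply le_antisymm
    · rw [Submodule.smul_le]
      intro y hy s _
      obtain ⟨t, ht⟩ := hmx y hy
      refine ⟨t * s, trivial, ?_⟩
      rw [LinearMap.lsmul_apply, ← smul_mul_assoc, ← ht, Algebra.smul_def]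
    · rintro _ ⟨s, -, rfl⟩
      exact Submodule.smul_mem_smul hx trivial
  have hY : m ^ 2 • (⊤ : Submodule R S) = (m • (⊤ : Submodule R S)).map μ := by
    rw [pow_two, Submodule.mul_smul, Submodule.map_smul'', ← hX]
  have hmY (y : R) (hy : y ∈ m ^ 2) : ∃ s : S, algebraMap R S y = x ^ 2 • s := by
    have h1 : algebraMap R S y ∈ m ^ 2 • (⊤ : Submodule R S) := by
      rw [Algebra.algebraMap_eq_smul_one]
      exact Submodule.smul_mem_smul hy trivial
    rw [hY, hX] at h1
    obtain ⟨_, ⟨s, -, rfl⟩, hs⟩ := h1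
    exact ⟨s, by rw [← hs, pow_two, mul_smul]; rfl⟩
  have hcl (y : R) : y ∈ idealIntCl (m ^ 2) ↔ ι y ∈ m ^ 2 • (⊤ : Submodule R S) := by
    rw [mem_idealIntCl_iff (S := S) (Ideal.pow_mem_pow hx 2) (pow_mem hxr 2) hmY, hY, hX]
    constructor
    · rintro ⟨s, hs⟩
      exact ⟨x • s, ⟨s, trivial, rfl⟩, by
        rw [Algebra.linearMap_apply, hs, pow_two, mul_smul]; rfl⟩
    · rintro ⟨_, ⟨s, -, rfl⟩, hs⟩
      exact ⟨s, by rw [← Algebra.linearMap_apply, ← hs, pow_two, mul_smul]; rfl⟩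
  have hclm (y : R) (hy : y ∈ idealIntCl (m ^ 2)) : y ∈ m := by
    obtain ⟨k, -, a, ha, h⟩ := hy
    refine (maximalIdeal.isMaximal R).isPrime.mem_of_pow_mem k ?_
    rw [eq_neg_of_add_eq_zero_left h]
    refine neg_mem (sum_mem fun i hi ↦ Ideal.mul_mem_right _ _ ?_)
    rw [Finset.mem_Icc] at hi
    have h1 := ha i hi.1 hi.2
    rw [← pow_mul] at h1
    exact Ideal.pow_le_self (by omega) h1
  have hJ_eq : idealIntClI (m ^ 2) = Submodule.comap ι (m ^ 2 • (⊤ : Submodule R S)) := by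
    apply le_antisymm
    · exact Submodule.span_le.2 fun y hy ↦ (hcl y).1 hy
    · exact fun y hy ↦ Submodule.subset_span ((hcl y).2 hy)
  have hJ : Submodule.map ι (idealIntClI (m ^ 2)) =
      Submodule.map ι m ⊓ m ^ 2 • (⊤ : Submodule R S) := by
    rw [hJ_eq]
    ext s
    constructor
    · rintro ⟨y, hy, rfl⟩
      exact ⟨⟨y, hclm y ((hcl y).2 hy), rfl⟩, hy⟩
    · rintro ⟨⟨y, -, rfl⟩, hy⟩
      exact ⟨y, hy, rfl⟩
  have hm : Submodule.map ι m = 1 ⊓ m • (⊤ : Submodule R S) := by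
    ext s
    constructor
    · rintro ⟨y, hy, rfl⟩
      refine ⟨Submodule.mem_one.2 ⟨y, rfl⟩, ?_⟩
      rw [Algebra.linearMap_apply, Algebra.algebraMap_eq_smul_one]
      exact Submodule.smul_mem_smul hy trivial
    · rintro ⟨h1, h2⟩
      obtain ⟨y, rfl⟩ := Submodule.mem_one.1 h1
      refine ⟨y, (maximalIdeal.isMaximal R).isPrime.mem_of_pow_mem 2 (hclm _ ?_), rfl⟩
      rw [hX] at h2
      obtain ⟨s, -, hs⟩ := h2
      rw [mem_idealIntCl_iff (S := S) (Ideal.pow_mem_pow hx 2) (pow_mem hxr 2) hmY]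
      refine ⟨s ^ 2, ?_⟩
      rw [map_pow, ← hs, LinearMap.lsmul_apply, smul_pow]
  have hxm : Submodule.map ι (Ideal.span {x} * m : Ideal R) =
      (Submodule.map ι m).map μ := by
    ext s
    constructor
    · rintro ⟨y, hy, rfl⟩
      obtain ⟨z, hz, rfl⟩ := Ideal.mem_span_singleton_mul.1 hy
      exact ⟨ι z, ⟨z, hz, rfl⟩, (map_smul ι x z).symm⟩
    · rintro ⟨_, ⟨z, hz, rfl⟩, rfl⟩
      exact ⟨x * z, Ideal.mem_span_singleton_mul.2 ⟨z, hz, rfl⟩, map_smul ι x z⟩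
  have hmJ : (Submodule.map ι m).map μ ≤ Submodule.map ι (idealIntClI (m ^ 2)) := by
    rw [← hxm]
    refine Submodule.map_mono fun y hy ↦ ?_
    rw [hJ_eq, Submodule.mem_comap, Algebra.linearMap_apply, Algebra.algebraMap_eq_smul_one]
    refine Submodule.smul_mem_smul ?_ trivial
    rw [pow_two]
    exact Ideal.mul_mono_left ((Ideal.span_singleton_le_iff_mem _).2 hx) hy
  have hfinX : relLength ⊤ (m • (⊤ : Submodule R S)) ≠ ⊤ := by
    rw [hX]
    exact relLength_top_map_lsmul_ne_top hxr
  have hfin : relLength ⊤ (Submodule.map ι m) ≠ ⊤ := by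
    obtain ⟨c, hc, hcS⟩ := exists_smul_mem_one (R := R) (S := S)
    have hle : Submodule.map (LinearMap.lsmul R S (x * c)) ⊤ ≤ Submodule.map ι m := by
      rintro _ ⟨s, -, rfl⟩
      obtain ⟨r, hr⟩ := Submodule.mem_one.1 (hcS s)
      refine ⟨x * r, Ideal.mul_mem_right _ _ hx, ?_⟩
      rw [Algebra.linearMap_apply, map_mul, hr, LinearMap.lsmul_apply, mul_smul,
        Algebra.smul_def x]
    have h1 := relLength_top_map_lsmul_ne_top (S := S) (mul_mem hxr hc)
    rw [relLength_add hle le_top] at h1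
    exact fun h ↦ h1 (by rw [h, add_top])
  have key := relLength_eq_relLength_sup hμ hX hY hJ hm hmJ hfin hfinX
  rw [← hxm, relLength_map hι, ← hA, ← hB] at key
  rw [moduleLength, moduleLength, ← Module.coe_length, ← Module.coe_length]
  exact congrArg _ key
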